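/- arXiv:1806.10049 — 5 statements merged into one kernel-verified Lean document; each statement's English description precedes it below -/
import Mathlib

section
/- Let X be a real Banach space having property (D) and let Y ⊆ X be a closed linear subspace. Then Y has property (D). That is, for every total set Γ ⊆ Y* of continuous linear functionals on Y, the σ-algebra σ(Γ) on Y generated by Γ coincides with the σ-algebra σ(Y*) generated by all of Y*. -/
open MeasureTheory

/-- The smallest σ-algebra on `E` making every functional in `Γ` measurable. -/
def sigmaGen (E : Type*) [NormedAddCommGroup E] [NormedSpace ℝ E]
    (Γ : Set (E →L[ℝ] ℝ)) : MeasurableSpace E :=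
  ⨆ φ ∈ Γ, MeasurableSpace.comap (fun x => φ x) Real.measurableSpace

/-- A set of continuous linear functionals is total if it separates the points of `E`. -/
def IsTotalSet (E : Type*) [NormedAddCommGroup E] [NormedSpace ℝ E]
    (Γ : Set (E →L[ℝ] ℝ)) : Prop :=
  ∀ x : E, x ≠ 0 → ∃ φ ∈ Γ, φ x ≠ 0

/-- Gulisashvili's property (D): for every total set of functionals `Γ`, the σ-algebra
generated by `Γ` coincides with the σ-algebra generated by all of the dual. -/
def HasPropertyD (E : Type*) [NormedAddCommGroup E] [NormedSpace ℝ E] : Prop :=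
  ∀ Γ : Set (E →L[ℝ] ℝ), IsTotalSet E Γ → sigmaGen E Γ = sigmaGen E Set.univ

/-! A functional on `Y` extends to `X` by Hahn–Banach, and a point outside the closed subspace `Y`
is separated from `Y` by a functional vanishing on `Y`. Hence, if `Γ` is total on `Y`, then the
functionals on `X` whose restriction to `Y` lies in `Γ ∪ {0}` form a total set on `X`, and property
(D) of `X` says that they generate `σ(X*)`. The trace on `Y` of the σ-algebra generated by a set of
functionals is generated by their restrictions, so taking traces gives `σ(Γ ∪ {0}) = σ(Y*)`, and
the zero functional contributes nothing to the left-hand side. -/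

section HahnBanach

theorem surjective_comp_subtypeL {𝕜 E : Type*} [NontriviallyNormedField 𝕜]
    [IsRCLikeNormedField 𝕜] [AddCommGroup E] [TopologicalSpace E] [Module 𝕜 E]
    [PolynormableSpace 𝕜 E] (S : Submodule 𝕜 E) :
    Function.Surjective fun φ : StrongDual 𝕜 E => φ ∘L S.subtypeL := fun ψ =>
  let ⟨φ, hφ⟩ := StrongDual.exists_extension S ψ
  ⟨φ, ContinuousLinearMap.ext hφ⟩

theorem exists_comp_subtypeL_eq_zero_apply_ne_zero {𝕜 E : Type*} [RCLike 𝕜]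
    [SeminormedAddCommGroup E] [NormedSpace 𝕜 E] {S : Submodule 𝕜 E}
    (hS : IsClosed (S : Set E)) {x : E} (hx : x ∉ S) :
    ∃ φ : StrongDual 𝕜 E, φ ∘L S.subtypeL = 0 ∧ φ x ≠ 0 := by
  have hx_quot : S.mkQL x ≠ 0 := by simpa using hx
  obtain ⟨f, hf⟩ := SeparatingDual.exists_ne_zero (R := 𝕜) hx_quot
  refine ⟨f ∘L S.mkQL, ?_, hf⟩
  ext y
  have hy : S.mkQL y = 0 := (Submodule.Quotient.mk_eq_zero S).2 y.2
  exact (congrArg f hy).trans (map_zero f)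

end HahnBanach

section SigmaGen

variable {E F : Type*} [NormedAddCommGroup E] [NormedSpace ℝ E]
  [NormedAddCommGroup F] [NormedSpace ℝ F]

theorem comap_sigmaGen (T : F →L[ℝ] E) (Γ : Set (E →L[ℝ] ℝ)) :
    (sigmaGen E Γ).comap T = sigmaGen F ((· ∘L T) '' Γ) := by
  simp only [sigmaGen, MeasurableSpace.comap_iSup, MeasurableSpace.comap_comp, iSup_image]
  rfl

theorem sigmaGen_insert_zero (Γ : Set (E →L[ℝ] ℝ)) :
    sigmaGen E (insert 0 Γ) = sigmaGen E Γ := by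
  rw [sigmaGen, iSup_insert]
  simp [sigmaGen]

end SigmaGen

section Subspace

variable {X : Type*} [NormedAddCommGroup X] [NormedSpace ℝ X]

theorem IsTotalSet.preimage_comp_subtypeL {Y : Submodule ℝ X} (hY : IsClosed (Y : Set X))
    {Γ : Set (Y →L[ℝ] ℝ)} (hΓ : IsTotalSet Y Γ) :
    IsTotalSet X ((· ∘L Y.subtypeL) ⁻¹' insert 0 Γ) := by
  intro x hx
  by_cases hxY : x ∈ Y
  · obtain ⟨ψ, hψ, hψx⟩ := hΓ ⟨x, hxY⟩ (by simpa using hx)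
    obtain ⟨φ, rfl⟩ := surjective_comp_subtypeL Y ψ
    exact ⟨φ, .inr hψ, hψx⟩
  · obtain ⟨φ, hφY, hφx⟩ := exists_comp_subtypeL_eq_zero_apply_ne_zero hY hxY
    exact ⟨φ, .inl hφY, hφx⟩

theorem subspace_hasPropertyD_general (hX : HasPropertyD X) (Y : Submodule ℝ X)
    (hY : IsClosed (Y : Set X)) : HasPropertyD Y := by
  intro Γ hΓ
  have hsurj := surjective_comp_subtypeL Y
  calc sigmaGen Y Γ
      = sigmaGen Y (insert 0 Γ) := (sigmaGen_insert_zero Γ).symm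
    _ = sigmaGen Y ((· ∘L Y.subtypeL) '' ((· ∘L Y.subtypeL) ⁻¹' insert 0 Γ)) := by
        rw [Set.image_preimage_eq _ hsurj]
    _ = (sigmaGen X ((· ∘L Y.subtypeL) ⁻¹' insert 0 Γ)).comap Y.subtypeL :=
        (comap_sigmaGen _ _).symm
    _ = (sigmaGen X Set.univ).comap Y.subtypeL := by
        rw [hX _ (hΓ.preimage_comp_subtypeL hY)]
    _ = sigmaGen Y ((· ∘L Y.subtypeL) '' Set.univ) := comap_sigmaGen _ _
    _ = sigmaGen Y Set.univ := by rw [Set.image_univ_of_surjective hsurj]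

end Subspace

/-- If a Banach space `X` has property (D), then every closed subspace `Y ⊆ X`
has property (D). -/
theorem subspace_hasPropertyD {X : Type*} [NormedAddCommGroup X] [NormedSpace ℝ X]
    [CompleteSpace X] (hX : HasPropertyD X)
    (Y : Submodule ℝ X) (hY : IsClosed (Y : Set X)) :
    HasPropertyD Y :=
  subspace_hasPropertyD_general hX Y hY
end

section
/- Let X be a real Banach space with property (D) and let {(x_i, x_i*) : i ∈ I} ⊆ X × X* be a Markushevich basis of X. Then for every x* ∈ X*, the set {i ∈ I : x*(x_i) ≠ 0} is countable (hence X is weakly Lindelöf determined). -/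
open MeasureTheory

/-! A set in `σ(Γ)` is decided by countably many functionals of `Γ`. For a functional `φ` measurable
with respect to `σ(Γ)`, applying this to the kernel of `φ` yields a countable `C ⊆ Γ` whose common
kernel lies in the kernel of `φ`, so the support of `φ` along a family of vectors is covered by the
supports of the members of `C`. Under property (D) every `φ` is `σ(Γ)`-measurable as soon as `Γ` is
total, and the coordinate functionals of a Markushevich basis have supports with one element. -/

theorem exists_countable_dependsOn_mem {ι : Type*} {β : ι → Type*} [∀ i, MeasurableSpace (β i)]
    {B : Set (∀ i, β i)} (hB : MeasurableSet B) :
    ∃ C : Set ι, C.Countable ∧ DependsOn (· ∈ B) C := by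
  rw [MeasurableSpace.pi, MeasurableSpace.measurableSpace_iSup_eq] at hB
  induction B, hB using MeasurableSpace.generateFrom_induction with
  | hC B hB _ =>
    obtain ⟨i, t, -, rfl⟩ := hB
    exact ⟨{i}, Set.countable_singleton i, fun u v huv => congrArg (· ∈ t) (huv i rfl)⟩
  | empty => exact ⟨∅, Set.countable_empty, fun _ _ _ => rfl⟩
  | compl B _ ih =>
    obtain ⟨C, hC, hdep⟩ := ih
    exact ⟨C, hC, fun u v huv => congrArg Not (hdep huv)⟩
  | iUnion B _ ih =>
    choose C hC hdep using ih
    refine ⟨⋃ n, C n, Set.countable_iUnion hC, fun u v huv => ?_⟩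
    simp only [Set.mem_iUnion]
    exact propext <| exists_congr fun n =>
      (hdep n fun i hi => huv i (Set.mem_iUnion_of_mem n hi)).to_iff

section sigmaGen

variable {E : Type*} [NormedAddCommGroup E] [NormedSpace ℝ E] {Γ : Set (E →L[ℝ] ℝ)}

theorem measurable_sigmaGen_of_mem {φ : E →L[ℝ] ℝ} (hφ : φ ∈ Γ) : Measurable[sigmaGen E Γ] φ :=
  measurable_iff_comap_le.2 <|
    le_iSup₂ (f := fun ψ (_ : ψ ∈ Γ) => MeasurableSpace.comap ψ Real.measurableSpace) φ hφ

theorem sigmaGen_eq_comap_pi :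
    sigmaGen E Γ = MeasurableSpace.comap (fun x (γ : Γ) => γ.1 x) MeasurableSpace.pi := by
  simp only [sigmaGen, MeasurableSpace.pi, MeasurableSpace.comap_iSup, MeasurableSpace.comap_comp,
    Function.comp_def, iSup_subtype]

theorem HasPropertyD.measurable (hE : HasPropertyD E) (hΓ : IsTotalSet E Γ) (φ : E →L[ℝ] ℝ) :
    Measurable[sigmaGen E Γ] φ :=
  hE Γ hΓ ▸ measurable_sigmaGen_of_mem (Set.mem_univ φ)

theorem exists_countable_forall_apply_eq_zero_of_measurable {φ : E →L[ℝ] ℝ}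
    (hφ : Measurable[sigmaGen E Γ] φ) :
    ∃ C ⊆ Γ, C.Countable ∧ ∀ x : E, (∀ γ ∈ C, γ x = 0) → φ x = 0 := by
  rw [sigmaGen_eq_comap_pi] at hφ
  obtain ⟨B, hB, hker⟩ := hφ (measurableSet_singleton 0)
  have mem_B_iff (x : E) : (fun γ : Γ => γ.1 x) ∈ B ↔ φ x = 0 := Set.ext_iff.1 hker x
  obtain ⟨C, hC, hdep⟩ := exists_countable_dependsOn_mem hB
  refine ⟨Subtype.val '' C, Subtype.coe_image_subset Γ C, hC.image _, fun x hx => ?_⟩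
  have agree_zero : ∀ γ ∈ C, γ.1 x = γ.1 0 := fun γ hγ => by
    rw [hx γ (Set.mem_image_of_mem _ hγ), map_zero]
  rw [← mem_B_iff]
  exact (hdep agree_zero).mpr ((mem_B_iff 0).2 (map_zero φ))

theorem countable_support_of_measurable {φ : E →L[ℝ] ℝ} {I : Type*} {x : I → E}
    (hx : ∀ γ ∈ Γ, {i : I | γ (x i) ≠ 0}.Countable) (hφ : Measurable[sigmaGen E Γ] φ) :
    {i : I | φ (x i) ≠ 0}.Countable := by
  obtain ⟨C, hCΓ, hC, hzero⟩ := exists_countable_forall_apply_eq_zero_of_measurable hφ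
  refine (hC.biUnion fun γ hγ => hx γ (hCΓ hγ)).mono fun i hi => ?_
  by_contra hiC
  have vanishes : ∀ γ ∈ C, γ (x i) = 0 := fun γ hγ =>
    by_contra fun hne => hiC (Set.mem_biUnion hγ hne)
  exact hi (hzero (x i) vanishes)

theorem countable_support_of_markushevich_of_propertyD_general (hE : HasPropertyD E)
    (hΓ : IsTotalSet E Γ) {I : Type*} {x : I → E}
    (hx : ∀ γ ∈ Γ, {i : I | γ (x i) ≠ 0}.Countable) (φ : E →L[ℝ] ℝ) :
    {i : I | φ (x i) ≠ 0}.Countable :=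
  countable_support_of_measurable hx (hE.measurable hΓ φ)

end sigmaGen

/-- If `X` is a Banach space with property (D) and `{(x_i, x_i*)}` is a Markushevich
basis of `X`, then for every `φ ∈ X*` the set `{i : φ (x i) ≠ 0}` is countable
(hence `X` is weakly Lindelöf determined). -/
theorem countable_support_of_markushevich_of_propertyD
    {X : Type*} [NormedAddCommGroup X] [NormedSpace ℝ X] [CompleteSpace X]
    (hX : HasPropertyD X)
    {I : Type*} (x : I → X) (x' : I → (X →L[ℝ] ℝ))
    (hbiorth : ∀ i j : I, (i = j → x' j (x i) = 1) ∧ (i ≠ j → x' j (x i) = 0))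
    (hspan : (Submodule.span ℝ (Set.range x)).topologicalClosure = ⊤)
    (htotal : IsTotalSet X (Set.range x'))
    (φ : X →L[ℝ] ℝ) :
    {i : I | φ (x i) ≠ 0}.Countable :=
  countable_support_of_markushevich_of_propertyD_general hX htotal (Set.forall_mem_range.2 fun j =>
    (Set.countable_singleton j).mono fun i => not_imp_comm.1 (hbiorth i j).2) φ
end

section
/- Let (Ω,Σ,ν) be a complete probability space, X a real Banach space, Γ ⊆ X* a total linear subspace, and f : Ω → X a Γ-integrable function. If the finitely additive vector measure I_f : Σ → X, I_f(A) = ∫_A f dν, is countably additive, then the family Z = {x* ∘ f : x* ∈ Γ, ‖x*‖ ≤ 1} is uniformly integrable in L¹(ν). -/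
open MeasureTheory Filter Topology

/-- A family `H` of real-valued functions is uniformly integrable in `L¹(ν)`:
it is bounded in `L¹`-norm and uniformly absolutely continuous. -/
def UnifIntegrableFam {Ω : Type*} [MeasurableSpace Ω] (ν : Measure Ω)
    (H : Set (Ω → ℝ)) : Prop :=
  (∃ C : ℝ, ∀ h ∈ H, ∫ ω, |h ω| ∂ν ≤ C) ∧
  ∀ ε : ℝ, 0 < ε → ∃ δ : ℝ, 0 < δ ∧ ∀ h ∈ H, ∀ A : Set Ω, MeasurableSet A →
    ν A ≤ ENNReal.ofReal δ → ∫ ω in A, |h ω| ∂ν ≤ ε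

open scoped ENNReal NNReal

/-!
Write `v` for the vector measure `m`. For `φ ∈ Γ` with `‖φ‖ ≤ 1`, the signed measure `φ ∘ v` has
density `φ ∘ f`, so `∫_A |φ ∘ f| dν` is its variation on `A`, which is at most the semivariation of
`v` on `A`, uniformly in `φ`. The semivariation is bounded, and it tends to zero along measurable
sets decreasing to the empty set. If `∑ ν (A n) < ∞`, then `limsup A` is a null set, so removing it
does not affect the integrals, and without it the tails `⋃ j ≥ n, A j` decrease to the empty set;
this forces uniform absolute continuity.
-/

theorem tendsto_of_forall_tendsto_comp_monotone_seq {ι α : Type*} [Preorder ι]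
    [(atTop : Filter ι).IsCountablyGenerated] {F : ι → α} {l : Filter α}
    (h : ∀ u : ℕ → ι, Monotone u → Tendsto u atTop atTop → Tendsto (F ∘ u) atTop l) :
    Tendsto F atTop l := by
  refine tendsto_of_subseq_tendsto fun u hu => ?_
  obtain ⟨g, hg | hg⟩ := exists_increasing_or_nonincreasing_subseq (· ≤ ·) (u : ℕ → ι)
  · refine ⟨g, h (u ∘ g) ?_ (hu.comp g.strictMono.tendsto_atTop)⟩
    exact monotone_nat_of_le_succ fun n => hg n (n + 1) n.lt_succ_self
  · obtain ⟨n, hn, hn0⟩ := (((hu.comp g.strictMono.tendsto_atTop).eventually_ge_atTop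
      (u (g 0))).and (eventually_gt_atTop 0)).exists
    exact absurd hn (hg 0 n hn0)

/-- Countable additivity of a set function, only for the given enumeration of the disjoint sets:
the sums are ordered partial sums, whereas a `VectorMeasure` asks for unconditional convergence.
Values on nonmeasurable sets are not restricted. -/
def IsCountablyAdditive {Ω X : Type*} [MeasurableSpace Ω] [AddCommMonoid X] [TopologicalSpace X]
    (m : Set Ω → X) : Prop :=
  ∀ A : ℕ → Set Ω, (∀ n, MeasurableSet (A n)) → Pairwise (Function.onFun Disjoint A) →
    Tendsto (fun N => ∑ n ∈ Finset.range N, m (A n)) atTop (𝓝 (m (⋃ n, A n)))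

namespace IsCountablyAdditive

variable {Ω X : Type*} [MeasurableSpace Ω] [AddCommGroup X] [TopologicalSpace X]
  [IsTopologicalAddGroup X] [T2Space X] {m : Set Ω → X}

theorem apply_empty (hm : IsCountablyAdditive m) : m ∅ = 0 := by
  have hlim := hm (fun _ => ∅) (fun _ => .empty) fun _ _ _ => disjoint_bot_left
  have hdiff := (hlim.comp (tendsto_add_atTop_nat 1)).sub hlim
  simp only [Function.comp_def, Finset.sum_range_succ, add_sub_cancel_left, sub_self] at hdiff
  exact tendsto_nhds_unique tendsto_const_nhds hdiff

theorem apply_biUnion_finset (hm : IsCountablyAdditive m) {A : ℕ → Set Ω}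
    (hA : ∀ n, MeasurableSet (A n)) (hd : Pairwise (Function.onFun Disjoint A)) (t : Finset ℕ) :
    m (⋃ n ∈ t, A n) = ∑ n ∈ t, m (A n) := by
  have hlim := hm (fun n => ⋃ _ : n ∈ t, A n) (fun n => .iUnion fun _ => hA n) fun i j hij =>
    (hd hij).mono (Set.iUnion_subset fun _ => subset_rfl) (Set.iUnion_subset fun _ => subset_rfl)
  have hterm (n : ℕ) : m (⋃ _ : n ∈ t, A n) = if n ∈ t then m (A n) else 0 := by
    split_ifs with hn <;> simp [hn, hm.apply_empty]
  have hsum : HasSum (fun n => m (⋃ _ : n ∈ t, A n)) (∑ n ∈ t, m (A n)) := by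
    rw [← Finset.sum_congr rfl fun n hn => (hterm n).trans (if_pos hn)]
    exact hasSum_sum_of_ne_finset_zero fun n hn => (hterm n).trans (if_neg hn)
  exact tendsto_nhds_unique hlim hsum.tendsto_sum_nat

theorem tendsto_iUnion_of_monotone (hm : IsCountablyAdditive m) {D : ℕ → Set Ω}
    (hD : ∀ n, MeasurableSet (D n)) (hmono : Monotone D) :
    Tendsto (fun n => m (D n)) atTop (𝓝 (m (⋃ n, D n))) := by
  have hmeas (n : ℕ) : MeasurableSet (disjointed D n) := .disjointed hD n
  have hlim := (hm _ hmeas (disjoint_disjointed D)).comp (tendsto_add_atTop_nat 1)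
  rw [iUnion_disjointed] at hlim
  refine hlim.congr fun n => ?_
  rw [Function.comp_apply, ← hm.apply_biUnion_finset hmeas (disjoint_disjointed D),
    biUnion_range_succ_disjointed, hmono.partialSups_eq]

/-- Continuity from below along increasing finite unions of the `A n` makes the order of summation
irrelevant. -/
theorem hasSum (hm : IsCountablyAdditive m) {A : ℕ → Set Ω} (hA : ∀ n, MeasurableSet (A n))
    (hd : Pairwise (Function.onFun Disjoint A)) :
    HasSum (fun n => m (A n)) (m (⋃ n, A n)) := by
  refine tendsto_of_forall_tendsto_comp_monotone_seq fun t htmono ht => ?_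
  have hcover : ⋃ k, ⋃ n ∈ t k, A n = ⋃ n, A n := by
    refine subset_antisymm (Set.iUnion_subset fun k => Set.iUnion₂_subset fun n _ =>
      Set.subset_iUnion A n) (Set.iUnion_subset fun n => ?_)
    obtain ⟨k, hk⟩ := (ht.eventually_ge_atTop {n}).exists
    exact Set.subset_iUnion_of_subset k
      (Set.subset_biUnion_of_mem (u := A) (Finset.singleton_subset_iff.mp hk))
  have hlim := hm.tendsto_iUnion_of_monotone (D := fun k => ⋃ n ∈ t k, A n)
    (fun k => (t k).measurableSet_biUnion fun n _ => hA n)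
    fun _ _ hjk => Set.biUnion_subset_biUnion_left (htmono hjk)
  rw [hcover] at hlim
  exact hlim.congr fun k => hm.apply_biUnion_finset hA hd (t k)

open scoped Classical in
/-- The vector measure that agrees with `m` on measurable sets and, as `VectorMeasure` requires,
vanishes on all other sets. -/
noncomputable def toVectorMeasure (hm : IsCountablyAdditive m) : VectorMeasure Ω X where
  measureOf' A := if MeasurableSet A then m A else 0
  empty' := by simp [hm.apply_empty]
  not_measurable' _ hA := if_neg hA
  m_iUnion' A hA hd := by simpa [hA, MeasurableSet.iUnion hA] using hm.hasSum hA hd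

theorem toVectorMeasure_apply (hm : IsCountablyAdditive m) {A : Set Ω} (hA : MeasurableSet A) :
    hm.toVectorMeasure A = m A :=
  if_pos hA

end IsCountablyAdditive

section Semivariation

variable {Ω X : Type*} [MeasurableSpace Ω] [NormedAddCommGroup X] [NormedSpace ℝ X]
  {v : VectorMeasure Ω X}

theorem exists_subset_eventually_lt_enorm_sdiff {a : ℝ≥0∞} {s : Set Ω} (hs : MeasurableSet s)
    (ha : a < v.semivariation s) {B : ℕ → Set Ω} (hB : ∀ n, MeasurableSet (B n))
    (hanti : Antitone B) (hempty : ⋂ n, B n = ∅) :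
    ∃ E ⊆ s, MeasurableSet E ∧ ∀ᶠ k in atTop, a < 2 * ‖v (E \ B k)‖ₑ := by
  obtain ⟨E, hEs, hE, haE⟩ :=
    VectorMeasure.exists_subset_lt_enorm_apply_of_lt_semivariation hs ha
  refine ⟨E, hEs, hE, ?_⟩
  have hlim := v.tendsto_vectorMeasure_iUnion_atTop_nat (s := fun k => E \ B k)
    (fun _ _ hij => Set.sdiff_subset_sdiff_right (hanti hij)) fun k => hE.diff (hB k)
  rw [← Set.sdiff_iInter, hempty, Set.sdiff_empty] at hlim
  exact (ENNReal.Tendsto.const_mul hlim.enorm (.inr ENNReal.ofNat_ne_top)).eventually_const_lt haE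

/-- If the semivariations stayed above `ε`, then one could choose successively, in the sets `B n`,
disjoint sets whose measures do not tend to zero. -/
theorem tendsto_semivariation_of_antitone_of_iInter_eq_empty {B : ℕ → Set Ω}
    (hB : ∀ n, MeasurableSet (B n)) (hanti : Antitone B) (hempty : ⋂ n, B n = ∅) :
    Tendsto (fun n => v.semivariation (B n)) atTop (𝓝 0) := by
  have hsemi : Antitone fun n => v.semivariation (B n) := fun _ _ hij =>
    VectorMeasure.semivariation_mono (hanti hij)
  suffices hinf : ⨅ n, v.semivariation (B n) = 0 from hinf ▸ tendsto_atTop_iInf hsemi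
  by_contra hinf
  obtain ⟨ε, hε, hlt⟩ := exists_between (pos_iff_ne_zero.2 hinf)
  choose E hEB hE hlarge using fun n => exists_subset_eventually_lt_enorm_sdiff (hB n)
    (hlt.trans_le (iInf_le _ n)) hB hanti hempty
  choose next hεE hnext using fun n => ((hlarge n).and (eventually_gt_atTop n)).exists
  let n (i : ℕ) : ℕ := next^[i] 0
  have hn_succ (i : ℕ) : n (i + 1) = next (n i) := Function.iterate_succ_apply' next i 0
  have hn_mono : StrictMono n := strictMono_nat_of_lt_succ fun i => hn_succ i ▸ hnext (n i)
  have hdisj : Pairwise (Function.onFun Disjoint fun i => E (n i) \ B (next (n i))) :=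
    (pairwise_disjoint_on _).2 fun i j hij => by
      rw [← hn_succ]
      exact Set.disjoint_sdiff_left.mono_right
        (Set.sdiff_subset.trans ((hEB _).trans (hanti (hn_mono.monotone hij))))
  have hzero := (v.m_iUnion (fun i => (hE _).diff (hB _)) hdisj).summable.tendsto_atTop_zero
  have hzero_two := ENNReal.Tendsto.const_mul (a := 2) hzero.enorm (.inr ENNReal.ofNat_ne_top)
  rw [enorm_zero, mul_zero] at hzero_two
  obtain ⟨i, hi⟩ := (hzero_two.eventually_lt_const hε).exists
  exact (hεE (n i)).not_gt hi

/-- Pettis' theorem on absolute continuity, for a `v` that need not vanish on `μ`-null sets: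
discarding `N` accounts for the singular part of `v`. -/
theorem exists_null_semivariation_sdiff_le (v : VectorMeasure Ω X) (μ : Measure Ω) {ε : ℝ≥0∞}
    (hε : 0 < ε) :
    ∃ δ : ℝ≥0, 0 < δ ∧ ∀ A, MeasurableSet A → μ A ≤ δ →
      ∃ N, MeasurableSet N ∧ μ N = 0 ∧ v.semivariation (A \ N) ≤ ε := by
  by_contra! hcon
  obtain ⟨δ, hδ, hδsum⟩ := ENNReal.exists_pos_sum_of_countable one_ne_zero ℕ
  choose A hA hAδ hAε using fun n => hcon (δ n) (hδ n)
  have hnull : μ (limsup A atTop) = 0 :=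
    measure_limsup_atTop_eq_zero (ne_top_of_lt ((ENNReal.tsum_le_tsum hAδ).trans_lt hδsum))
  have hlimsup : MeasurableSet (limsup A atTop) := .measurableSet_limsup hA
  let tail (n : ℕ) : Set Ω := ⋃ j ≥ n, A j
  have htail : ⋂ n, tail n \ limsup A atTop = ∅ := by
    simp only [Set.sdiff_eq, ← Set.iInter_inter, tail, limsup_eq_iInf_iSup_of_nat]
    exact Set.inter_compl_self _
  have htail_meas (n : ℕ) : MeasurableSet (tail n) :=
    .iUnion fun j => .iUnion fun _ => hA j
  have htail_anti : Antitone tail := fun _ _ hij =>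
    Set.biUnion_subset_biUnion_left fun _ hk => hij.trans hk
  have hlim := tendsto_semivariation_of_antitone_of_iInter_eq_empty (v := v)
    (fun n => (htail_meas n).diff hlimsup)
    (fun _ _ hij => Set.sdiff_subset_sdiff_left (htail_anti hij)) htail
  obtain ⟨n, hn⟩ := (hlim.eventually_lt_const hε).exists
  have hAtail : A n ⊆ tail n := Set.subset_biUnion_of_mem (u := A) (le_refl n)
  exact (hAε n _ hlimsup hnull).not_ge
    ((VectorMeasure.semivariation_mono (Set.sdiff_subset_sdiff_left hAtail)).trans hn.le)

theorem ofReal_setIntegral_abs_le_semivariation {μ : Measure Ω} {g : Ω → ℝ} (hg : Integrable g μ)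
    {φ : X →L[ℝ] ℝ} (hφ : ‖φ‖ ≤ 1)
    (h : ∀ A, MeasurableSet A → φ (v A) = ∫ ω in A, g ω ∂μ) {A : Set Ω} (hA : MeasurableSet A) :
    ENNReal.ofReal (∫ ω in A, |g ω| ∂μ) ≤ v.semivariation A := by
  have hdensity : v.mapRange (φ : X →+ ℝ) φ.continuous = μ.withDensityᵥ g :=
    VectorMeasure.ext fun E hE => by
      rw [withDensityᵥ_apply hg hE, ← h E hE]
      rfl
  have hφ' : ‖φ‖ₑ ≤ 1 := by simpa [← ofReal_norm] using hφ
  calc ENNReal.ofReal (∫ ω in A, |g ω| ∂μ)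
      = ∫⁻ ω in A, ‖g ω‖ₑ ∂μ := ofReal_integral_norm_eq_lintegral_enorm hg.integrableOn
    _ = (μ.withDensityᵥ g).variation A := by
      rw [μ.variation_withDensityᵥ hg, withDensity_apply _ hA]
    _ ≤ v.semivariation A := hdensity ▸ le_iSup₂ (α := ℝ≥0∞) φ hφ'

end Semivariation

theorem unifIntegrable_of_countably_additive_general
    {Ω X : Type*} [MeasurableSpace Ω] [NormedAddCommGroup X] [NormedSpace ℝ X]
    (ν : Measure Ω) (Γ : Set (X →L[ℝ] ℝ)) (f : Ω → X)
    (hscal : ∀ φ ∈ Γ, Integrable (fun ω => φ (f ω)) ν)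
    (m : Set Ω → X)
    (hm : ∀ A : Set Ω, MeasurableSet A → ∀ φ ∈ Γ, φ (m A) = ∫ ω in A, φ (f ω) ∂ν)
    (hca : IsCountablyAdditive m) :
    UnifIntegrableFam ν {g | ∃ φ ∈ Γ, ‖φ‖ ≤ 1 ∧ g = fun ω => φ (f ω)} := by
  set v := hca.toVectorMeasure
  have habs : ∀ φ ∈ Γ, ‖φ‖ ≤ 1 → ∀ A, MeasurableSet A →
      ENNReal.ofReal (∫ ω in A, |φ (f ω)| ∂ν) ≤ v.semivariation A := fun φ hφ hφ1 A hA =>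
    ofReal_setIntegral_abs_le_semivariation (hscal φ hφ) hφ1
      (fun E hE => by rw [hca.toVectorMeasure_apply hE, hm E hE φ hφ]) hA
  refine ⟨⟨v.bound, ?_⟩, fun ε hε => ?_⟩
  · rintro _ ⟨φ, hφ, hφ1, rfl⟩
    have hbound := (habs φ hφ hφ1 _ .univ).trans VectorMeasure.semivariation_apply_le_bound
    rwa [← ENNReal.ofReal_coe_nnreal, ENNReal.ofReal_le_ofReal_iff v.bound.coe_nonneg,
      setIntegral_univ] at hbound
  · obtain ⟨δ, hδ, hsmall⟩ := exists_null_semivariation_sdiff_le v ν (ENNReal.ofReal_pos.2 hε)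
    refine ⟨δ, hδ, ?_⟩
    rintro _ ⟨φ, hφ, hφ1, rfl⟩ A hA hνA
    obtain ⟨N, hN, hνN, hAN⟩ := hsmall A hA (by rwa [← ENNReal.ofReal_coe_nnreal])
    rw [← setIntegral_congr_set (sdiff_null_ae_eq_self hνN),
      ← ENNReal.ofReal_le_ofReal_iff hε.le]
    exact (habs φ hφ hφ1 _ (hA.diff hN)).trans hAN

/-- If `f : Ω → X` is `Γ`-integrable (with indefinite integral `m`) and the vector
measure `m` is countably additive, then `{x* ∘ f : x* ∈ Γ, ‖x*‖ ≤ 1}` is uniformly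
integrable in `L¹(ν)`. -/
theorem unifIntegrable_of_countably_additive
    {Ω X : Type*} [MeasurableSpace Ω] [NormedAddCommGroup X] [NormedSpace ℝ X]
    [CompleteSpace X]
    (ν : Measure Ω) [IsProbabilityMeasure ν] [ν.IsComplete]
    (Γ : Submodule ℝ (X →L[ℝ] ℝ))
    (htotal : ∀ x : X, x ≠ 0 → ∃ φ ∈ Γ, φ x ≠ 0)
    (f : Ω → X)
    (hscal : ∀ φ ∈ Γ, Integrable (fun ω => φ (f ω)) ν)
    (m : Set Ω → X)
    (hm : ∀ A : Set Ω, MeasurableSet A → ∀ φ ∈ Γ, φ (m A) = ∫ ω in A, φ (f ω) ∂ν)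
    (hca : ∀ A : ℕ → Set Ω, (∀ n, MeasurableSet (A n)) →
      Pairwise (Function.onFun Disjoint A) →
      Tendsto (fun N => ∑ n ∈ Finset.range N, m (A n)) atTop (𝓝 (m (⋃ n, A n)))) :
    UnifIntegrableFam ν {g | ∃ φ ∈ Γ, ‖φ‖ ≤ 1 ∧ g = fun ω => φ (f ω)} :=
  unifIntegrable_of_countably_additive_general ν Γ f hscal m hm hca
end

section
/- Let (Ω,Σ,ν) be a complete probability space and X a real Banach space which has property (D) and the ν-Pettis Integral Property. Then for every total linear subspace Γ ⊆ X*, every Γ-integrable function f : Ω → X is Pettis integrable. -/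
open MeasureTheory Filter Topology

/-- `f` is Pettis integrable with respect to `ν`. -/
def PettisIntegrable {Ω X : Type*} [MeasurableSpace Ω]
    [NormedAddCommGroup X] [NormedSpace ℝ X]
    (ν : Measure Ω) (f : Ω → X) : Prop :=
  (∀ φ : X →L[ℝ] ℝ, Integrable (fun ω => φ (f ω)) ν) ∧
  ∀ A : Set Ω, MeasurableSet A → ∃ m : X, ∀ φ : X →L[ℝ] ℝ, φ m = ∫ ω in A, φ (f ω) ∂ν

/-- `X` has the `ν`-Pettis Integral Property: every scalarly measurable and scalarly
bounded function `f : Ω → X` is Pettis integrable. -/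
def HasPIP {Ω : Type*} [MeasurableSpace Ω] (ν : Measure Ω)
    (X : Type*) [NormedAddCommGroup X] [NormedSpace ℝ X] : Prop :=
  ∀ f : Ω → X,
    (∀ φ : X →L[ℝ] ℝ, Measurable (fun ω => φ (f ω))) →
    (∃ c : ℝ, 0 < c ∧ ∀ φ : X →L[ℝ] ℝ, ∀ᵐ ω ∂ν, |φ (f ω)| ≤ c * ‖φ‖) →
    PettisIntegrable ν f

/-!
Since `X` has property (D) and `ν` is complete, `f` is scalarly measurable, so some countable
partition `(Aₙ)` of `Ω` makes `f` scalarly bounded on each `Aₙ`, where the Pettis integral property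
applies. For measurable `B` put `xₙ = ∫_{Aₙ ∩ B} f`. By `Γ`-integrability every subseries of `∑ xₙ`
converges for `σ(X, Γ)`, and the point is an Orlicz–Pettis theorem: under property (D) the
convergence then also holds weakly. Indeed, for `φ ∈ X*`, property (D) makes the charge sending a
set of indices to the value of `φ` at the sum of the corresponding subseries a Borel function on the
Cantor space, and a measurable charge is countably additive by a Baire category argument.
-/

section MeasurableCharge

/-- A `G`-valued charge, i.e. a finitely additive function. The domain is a lattice with bottom
rather than a set algebra, so that it covers the Cantor space `ι → Bool` of subsets of `ι`. -/
def IsCharge {α G : Type*} [Lattice α] [OrderBot α] [Add G] (μ : α → G) : Prop :=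
  ∀ ⦃a b : α⦄, Disjoint a b → μ (a ⊔ b) = μ a + μ b

namespace IsCharge

variable {α ι G : Type*}

lemma map_bot [Lattice α] [OrderBot α] [AddGroup G] {μ : α → G} (hμ : IsCharge μ) : μ ⊥ = 0 := by
  simpa only [sup_bot_eq, left_eq_add] using hμ (disjoint_bot_left (a := (⊥ : α)))

lemma map_finset_sup [DistribLattice α] [OrderBot α] [AddCommGroup G] {μ : α → G}
    (hμ : IsCharge μ) {a : ι → α} (ha : Pairwise (Function.onFun Disjoint a)) (F : Finset ι) :
    μ (F.sup a) = ∑ i ∈ F, μ (a i) := by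
  classical
  induction F using Finset.induction_on with
  | empty => simpa only [Finset.sup_empty, Finset.sum_empty] using hμ.map_bot
  | insert i F hi ih =>
    have hdisj : Disjoint (a i) (F.sup a) :=
      Finset.disjoint_sup_right.2 fun j hj => ha (ne_of_mem_of_not_mem hj hi).symm
    rw [Finset.sup_insert, hμ hdisj, ih, Finset.sum_insert hi]

lemma map_inf_add_map_sdiff [GeneralizedBooleanAlgebra α] [Add G] {μ : α → G}
    (hμ : IsCharge μ) (a b : α) : μ (a ⊓ b) + μ (a \ b) = μ a := by
  rw [← hμ disjoint_inf_sdiff, sup_inf_sdiff]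

end IsCharge

lemma exists_isOpen_eventually_residual_dist_lt {Y Z : Type*} [TopologicalSpace Y] [BaireSpace Y]
    [Nonempty Y] [MeasurableSpace Y] [BorelSpace Y] [PseudoMetricSpace Z]
    [TopologicalSpace.SeparableSpace Z] [MeasurableSpace Z] [OpensMeasurableSpace Z] {f : Y → Z}
    (hf : Measurable f) {ε : ℝ} (hε : 0 < ε) :
    ∃ U : Set Y, IsOpen U ∧ U.Nonempty ∧ ∃ z, ∀ᶠ y in residual Y, y ∈ U → dist (f y) z < ε := by
  have : Nonempty Z := .map f inferInstance
  let z : ℕ → Z := TopologicalSpace.denseSeq Z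
  choose U hUo hU using fun n =>
    (hf (Metric.isOpen_ball (x := z n) (ε := ε)).measurableSet).residualEq_isOpen
  have hU' : ∀ n, ∀ᶠ y in residual Y, dist (f y) (z n) < ε ↔ y ∈ U n := fun n =>
    eventuallyEq_set.1 (hU n)
  obtain ⟨y, hy⟩ := (dense_of_mem_residual (eventually_countable_forall.2 hU')).nonempty
  obtain ⟨n, hn⟩ := (TopologicalSpace.denseRange_denseSeq Z).exists_dist_lt (f y) hε
  exact ⟨U n, hUo n, ⟨y, (hy n).1 hn⟩, z n, (hU' n).mono fun _ h => h.2⟩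

lemma tendsto_piMap_residual {ι : Type*} {α β : ι → Type*} [∀ i, TopologicalSpace (α i)]
    [∀ i, DiscreteTopology (α i)] [∀ i, TopologicalSpace (β i)] [∀ i, DiscreteTopology (β i)]
    {g : ∀ i, α i → β i} (hg : ∀ᶠ i in cofinite, Function.Surjective (g i)) :
    Tendsto (Pi.map g) (residual (∀ i, α i)) (residual (∀ i, β i)) :=
  tendsto_residual_of_isOpenMap (.piMap fun _ => continuous_of_discreteTopology)
    (.piMap (fun _ _ _ => isOpen_discrete _) hg)

namespace IsCharge

variable {ι G : Type*} [Countable ι] [SeminormedAddCommGroup G]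
  [TopologicalSpace.SeparableSpace G] [MeasurableSpace G] [OpensMeasurableSpace G]
  {μ : (ι → Bool) → G}

lemma exists_finset_eventually_norm_sub_lt (hμ : IsCharge μ) (hm : Measurable μ) {ε : ℝ}
    (hε : 0 < ε) : ∃ F : Finset ι, ∀ S : ι → Bool, (∀ i ∈ F, S i = false) →
      ∀ᶠ y in residual (ι → Bool), ‖μ (S ⊓ y) - μ (S \ y)‖ < ε := by
  classical
  obtain ⟨U, hUo, ⟨x, hxU⟩, z, hz⟩ := exists_isOpen_eventually_residual_dist_lt hm (half_pos hε)
  obtain ⟨F, u, hu, hFU⟩ := isOpen_pi_iff.1 hUo x hxU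
  refine ⟨F, fun S hS => ?_⟩
  have near {g : ι → Bool → Bool} (hgF : ∀ i ∈ F, ∀ b, g i b = x i)
      (hg : ∀ i ∉ F, Function.Surjective (g i)) :
      ∀ᶠ y in residual (ι → Bool), dist (μ (Pi.map g y)) z < ε / 2 := by
    have hmem (y : ι → Bool) : Pi.map g y ∈ U :=
      hFU fun i hi => by simpa only [Pi.map_apply, hgF i hi] using (hu i hi).2
    exact ((tendsto_piMap_residual (F.eventually_cofinite_notMem.mono hg)).eventually hz).mono
      fun y h => h (hmem y)
  -- Overwriting `y` on `F` puts it in a cylinder on which `μ` is generically almost constant, and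
  -- so does complementing it moreover on `S`; the two charges differ by `μ (S ⊓ y) - μ (S \ y)`.
  let keep : ι → Bool → Bool := fun i b => if i ∈ F then x i else b
  let flip : ι → Bool → Bool := fun i b => if i ∈ F then x i else b ^^ S i
  have near_keep := near (g := keep) (fun i hi b => if_pos hi)
    fun i hi b => ⟨b, if_neg hi⟩
  have near_flip := near (g := flip) (fun i hi b => if_pos hi)
    fun i hi b => ⟨b ^^ S i, by simp [flip, hi]⟩
  filter_upwards [near_keep, near_flip] with y hkeep hflip
  have keep_inf : Pi.map keep y ⊓ S = S ⊓ y := by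
    ext i; by_cases hi : i ∈ F <;> simp [keep, hi, hS, Bool.and_comm]
  have flip_inf : Pi.map flip y ⊓ S = S \ y := by
    ext i
    by_cases hi : i ∈ F
    · simp [flip, hi, hS, sdiff_eq]
    · cases h : S i <;> simp [flip, hi, h, sdiff_eq]
  have flip_sdiff : Pi.map flip y \ S = Pi.map keep y \ S := by
    ext i; by_cases hi : i ∈ F <;> cases h : S i <;> simp [keep, flip, hi, h, sdiff_eq]
  calc ‖μ (S ⊓ y) - μ (S \ y)‖ = dist (μ (Pi.map keep y)) (μ (Pi.map flip y)) := by
        rw [← hμ.map_inf_add_map_sdiff (Pi.map keep y) S,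
          ← hμ.map_inf_add_map_sdiff (Pi.map flip y) S, keep_inf, flip_inf, flip_sdiff,
          dist_add_right, dist_eq_norm]
    _ ≤ dist (μ (Pi.map keep y)) z + dist (μ (Pi.map flip y)) z := dist_triangle_right _ _ _
    _ < ε := by linarith

lemma exists_finset_norm_lt (hμ : IsCharge μ) (hm : Measurable μ) {ε : ℝ} (hε : 0 < ε) :
    ∃ F : Finset ι, ∀ S : ι → Bool, (∀ i ∈ F, S i = false) → ‖μ S‖ < ε := by
  obtain ⟨F, hF⟩ := hμ.exists_finset_eventually_norm_sub_lt hm (div_pos hε three_pos)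
  refine ⟨F, fun S hS => ?_⟩
  -- A generic colouring of `ι` by three colours has generic colour classes, so each third of `S`
  -- has nearly the same charge as the union of the other two.
  let colour : Fin 3 → (ι → Fin 3) → ι → Bool := fun j => Pi.map fun _ k => decide (k = j)
  have colour_surjective (j : Fin 3) : Function.Surjective fun k : Fin 3 => decide (k = j) := by
    revert j; decide
  have generic : ∀ j, ∀ᶠ c in residual (ι → Fin 3),
      ‖μ (S ⊓ colour j c) - μ (S \ colour j c)‖ < ε / 3 := fun j =>
    (tendsto_piMap_residual (.of_forall fun _ => colour_surjective j)).eventually (hF S hS)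
  obtain ⟨c, hc⟩ := (dense_of_mem_residual (eventually_countable_forall.2 generic)).nonempty
  have disj : Pairwise (Function.onFun Disjoint fun j => S ⊓ colour j c) := by
    refine fun j k hjk => disjoint_iff.2 (funext fun i => ?_)
    by_cases h : c i = j <;> simp [colour, h, hjk]
  have sup_eq : Finset.univ.sup (fun j => S ⊓ colour j c) = S :=
    le_antisymm (Finset.sup_le fun _ _ => inf_le_left) fun i => by
      simpa [colour] using
        Finset.le_sup (f := fun j => S ⊓ colour j c) (Finset.mem_univ (c i)) i
  have sum_eq : ∑ j, μ (S ⊓ colour j c) = μ S := by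
    rw [← hμ.map_finset_sup disj, sup_eq]
  have key : μ S = -∑ j, (μ (S ⊓ colour j c) - μ (S \ colour j c)) := by
    have h (j : Fin 3) : μ (S \ colour j c) = μ S - μ (S ⊓ colour j c) :=
      eq_sub_of_add_eq' (hμ.map_inf_add_map_sdiff S (colour j c))
    simp only [h, Finset.sum_sub_distrib, sum_eq, Finset.sum_const, Finset.card_fin]
    abel
  calc ‖μ S‖ ≤ ∑ j, ‖μ (S ⊓ colour j c) - μ (S \ colour j c)‖ := by
        rw [key, norm_neg]; exact norm_sum_le _ _
    _ < ∑ _j : Fin 3, ε / 3 :=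
        Finset.sum_lt_sum_of_nonempty Finset.univ_nonempty fun j _ => hc j
    _ = ε := by simp only [Finset.sum_const, Finset.card_fin, nsmul_eq_mul]; push_cast; ring

theorem hasSum_of_measurable [DecidableEq ι] (hμ : IsCharge μ) (hm : Measurable μ) :
    HasSum (fun i => μ (Function.update ⊥ i ⊤)) (μ ⊤) := by
  refine Metric.tendsto_atTop.2 fun ε hε => ?_
  obtain ⟨F₀, hF₀⟩ := hμ.exists_finset_norm_lt hm hε
  refine ⟨F₀, fun F hF => ?_⟩
  let single : ι → ι → Bool := fun i => Function.update ⊥ i ⊤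
  have disj : Pairwise (Function.onFun Disjoint single) := by
    refine fun i j hij => disjoint_iff.2 (funext fun k => ?_)
    by_cases h : k = i <;> simp [single, Function.update_apply, h, hij]
  have mem_sup (i : ι) (hi : i ∈ F) : F.sup single i = true :=
    top_le_iff.1 ((Function.update_self i ⊤ ⊥).ge.trans (Finset.le_sup (f := single) hi i))
  rw [← hμ.map_finset_sup disj, dist_comm, dist_eq_norm,
    ← hμ.map_inf_add_map_sdiff ⊤ (F.sup single), top_inf_eq, add_sub_cancel_left]
  exact hF₀ _ fun i hi => by simp [mem_sup i (hF hi)]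

end IsCharge

end MeasurableCharge

section PropertyD

variable {X : Type*} [NormedAddCommGroup X] [NormedSpace ℝ X] {Γ : Set (X →L[ℝ] ℝ)}

lemma IsTotalSet.eq_of_forall_apply_eq (hΓ : IsTotalSet X Γ) {x y : X}
    (h : ∀ φ ∈ Γ, φ x = φ y) : x = y := by
  by_contra hxy
  obtain ⟨φ, hφ, hne⟩ := hΓ (x - y) (sub_ne_zero.2 hxy)
  exact hne (by rw [map_sub, h φ hφ, sub_self])

lemma measurable_sigmaGen_iff {Y : Type*} [MeasurableSpace Y] {g : Y → X} :
    Measurable[_, sigmaGen X Γ] g ↔ ∀ φ ∈ Γ, Measurable fun y => φ (g y) := by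
  simp only [sigmaGen, measurable_iff_comap_le, MeasurableSpace.comap_iSup,
    MeasurableSpace.comap_comp, iSup_le_iff]
  rfl

lemma HasPropertyD.measurable_apply (hD : HasPropertyD X) (hΓ : IsTotalSet X Γ) {Y : Type*}
    [MeasurableSpace Y] {g : Y → X} (hg : ∀ φ ∈ Γ, Measurable fun y => φ (g y))
    (φ : X →L[ℝ] ℝ) : Measurable fun y => φ (g y) := by
  rw [← measurable_sigmaGen_iff, hD Γ hΓ, measurable_sigmaGen_iff] at hg
  exact hg φ (Set.mem_univ φ)

/-- An Orlicz–Pettis theorem for the topology `σ(X, Γ)`; `y s` is the sum of the subseries of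
`∑ x i` selected by `s`. -/
theorem HasPropertyD.hasSum_apply_of_subseries (hD : HasPropertyD X) (hΓ : IsTotalSet X Γ)
    {ι : Type*} [Countable ι] {x : ι → X} {y : (ι → Bool) → X}
    (hy : ∀ s, ∀ φ ∈ Γ, HasSum (fun i => if s i then φ (x i) else 0) (φ (y s)))
    (φ : X →L[ℝ] ℝ) : HasSum (fun i => φ (x i)) (φ (y ⊤)) := by
  classical
  have hmeas : Measurable fun s => φ (y s) := by
    refine hD.measurable_apply hΓ (fun ψ hψ => ?_) φ
    refine measurable_of_tendsto_metrizable' atTop (fun F => ?_)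
      (tendsto_pi_nhds.2 fun s => hy s ψ hψ)
    exact Finset.measurable_sum F fun i _ =>
      (measurable_of_countable fun b : Bool => if b then ψ (x i) else 0).comp
        (measurable_pi_apply i)
  have hcharge : IsCharge fun s => φ (y s) := by
    intro s t hst
    suffices y (s ⊔ t) = y s + y t by simp only [this, map_add]
    refine hΓ.eq_of_forall_apply_eq fun ψ hψ => (hy (s ⊔ t) ψ hψ).unique ?_
    rw [map_add]
    refine ((hy s ψ hψ).add (hy t ψ hψ)).congr_fun fun i => ?_
    have := Pi.disjoint_iff.1 hst i
    cases hs : s i <;> cases ht : t i <;> simp_all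
  have hsingle (i : ι) : y (Function.update ⊥ i ⊤) = x i := by
    refine hΓ.eq_of_forall_apply_eq fun ψ hψ => (hy _ ψ hψ).unique ?_
    refine (hasSum_ite_eq i (ψ (x i))).congr_fun fun j => ?_
    by_cases h : j = i <;> simp_all
  simpa only [hsingle] using hcharge.hasSum_of_measurable hmeas

end PropertyD

section Partition

variable {Ω : Type*} [MeasurableSpace Ω] {ν : Measure Ω}

lemma exists_countable_forall_ae_le_biUnion [SFinite ν] {ι : Type*} {B : ι → Set Ω}
    (hB : ∀ i, MeasurableSet (B i)) :
    ∃ s : Set ι, s.Countable ∧ ∀ i, B i ≤ᵐ[ν] ⋃ j ∈ s, B j := by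
  rw [← ae_toFinite (μ := ν)]
  let mass : Set ι → ENNReal := fun s => ν.toFinite (⋃ j ∈ s, B j)
  obtain ⟨u, -, hu, hmem⟩ := exists_seq_tendsto_sSup (S := mass '' {s | s.Countable})
    ⟨_, Set.mem_image_of_mem mass Set.countable_empty⟩ (OrderTop.bddAbove _)
  choose t ht hmass using hmem
  have hs : (⋃ n, t n).Countable := Set.countable_iUnion ht
  have hmax {s : Set ι} (hsc : s.Countable) : mass s ≤ mass (⋃ n, t n) :=
    (le_sSup (Set.mem_image_of_mem mass hsc)).trans <| le_of_tendsto' hu fun n => by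
      rw [← hmass n]
      exact measure_mono (Set.biUnion_subset_biUnion_left (Set.subset_iUnion t n))
  refine ⟨⋃ n, t n, hs, fun i => ?_⟩
  have hU : MeasurableSet (⋃ j ∈ ⋃ n, t n, B j) := .biUnion hs fun j _ => hB j
  have hae : (⋃ j ∈ ⋃ n, t n, B j) =ᵐ[ν.toFinite] ⋃ j ∈ insert i (⋃ n, t n), B j :=
    ae_eq_of_ae_subset_of_measure_ge
      (Set.biUnion_subset_biUnion_left (Set.subset_insert i _)).eventuallyLE
      (hmax (hs.insert i)) hU.nullMeasurableSet (measure_ne_top _ _)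
  exact (Set.subset_biUnion_of_mem (Set.mem_insert i _)).eventuallyLE.trans hae.symm.le

lemma exists_partition_ae_le [SFinite ν] {ι : Type*} {g : ι → Ω → ℝ}
    (hg : ∀ i, Measurable (g i)) (hbdd : ∀ ω, BddAbove (Set.range fun i => g i ω)) :
    ∃ A : ℕ → Set Ω, (∀ n, MeasurableSet (A n)) ∧ Pairwise (Function.onFun Disjoint A) ∧
      ⋃ n, A n = Set.univ ∧ ∀ n i, ∀ᵐ ω ∂ν, ω ∈ A n → g i ω ≤ n := by
  let B : ℕ → ι → Set Ω := fun n i => {ω | (n : ℝ) < g i ω}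
  have hB (n i) : MeasurableSet (B n i) := measurableSet_lt measurable_const (hg i)
  choose s hs hsB using fun n => exists_countable_forall_ae_le_biUnion (ν := ν) (hB n)
  let C : ℕ → Set Ω := fun n => (⋃ i ∈ s n, B n i)ᶜ
  have hC (n) : MeasurableSet (C n) := (MeasurableSet.biUnion (hs n) fun i _ => hB n i).compl
  refine ⟨disjointed C, .disjointed hC, disjoint_disjointed C, ?_, fun n i => ?_⟩
  · rw [iUnion_disjointed, Set.eq_univ_iff_forall]
    intro ω
    obtain ⟨M, hM⟩ := hbdd ω
    obtain ⟨n, hn⟩ := exists_nat_ge M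
    simp only [Set.mem_iUnion, C, B, Set.mem_compl_iff, Set.mem_ofPred_eq, not_exists, not_lt]
    exact ⟨n, fun i _ => (hM (Set.mem_range_self i)).trans hn⟩
  · filter_upwards [hsB n i] with ω hω hA
    exact not_lt.1 fun h => disjointed_subset C n hA (hω h)

lemma integrable_of_summable_setIntegral {ι : Type*} [Countable ι] {A : ι → Set Ω}
    (hA : ∀ i, MeasurableSet (A i)) (hcover : ⋃ i, A i = Set.univ) {g : Ω → ℝ}
    (hg : Measurable g) (hgA : ∀ i, IntegrableOn g (A i) ν)
    (hsum : ∀ B, MeasurableSet B → Summable fun i => ∫ ω in A i ∩ B, g ω ∂ν) :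
    Integrable g ν := by
  have key {h : Ω → ℝ} (hh : Measurable h) (hhA : ∀ i, IntegrableOn h (A i) ν)
      (hsum : ∀ B, MeasurableSet B → Summable fun i => ∫ ω in A i ∩ B, h ω ∂ν) :
      IntegrableOn h {ω | 0 ≤ h ω} ν := by
    have hP : MeasurableSet {ω | 0 ≤ h ω} := measurableSet_le measurable_const hh
    rw [← Set.univ_inter {ω | 0 ≤ h ω}, ← hcover, Set.iUnion_inter]
    refine integrableOn_iUnion_of_summable_integral_norm
      (fun i => (hhA i).mono_set Set.inter_subset_left) ((hsum _ hP).congr fun i => ?_)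
    exact setIntegral_congr_fun ((hA i).inter hP) fun ω hω => (Real.norm_of_nonneg hω.2).symm
  have hpos : IntegrableOn g {ω | 0 ≤ g ω} ν := key hg hgA hsum
  have hneg : IntegrableOn g {ω | 0 ≤ -g ω} ν := by
    refine integrable_neg_iff.1 (key hg.neg (fun i => (hgA i).neg) fun B hB => ?_)
    simpa only [Pi.neg_apply, integral_neg] using (hsum B hB).neg
  rw [← integrableOn_univ]
  convert hpos.union hneg using 1
  ext ω
  simp [le_total]

end Partition

section PettisIntegral

lemma apply_indicator {Ω X : Type*} [NormedAddCommGroup X] [NormedSpace ℝ X]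
    (φ : X →L[ℝ] ℝ) (A : Set Ω) (f : Ω → X) :
    (fun ω => φ (A.indicator f ω)) = A.indicator fun ω => φ (f ω) :=
  funext fun ω => (congrFun (Set.indicator_comp_of_zero (map_zero φ)) ω).symm

variable {Ω X : Type*} [MeasurableSpace Ω] {ν : Measure Ω} [NormedAddCommGroup X]
  [NormedSpace ℝ X] {f : Ω → X}

lemma pettisIntegrable_of_hasSum_setIntegral {ι : Type*} [Countable ι] {A : ι → Set Ω}
    (hA : ∀ i, MeasurableSet (A i)) (hdisj : Pairwise (Function.onFun Disjoint A))
    (hcover : ⋃ i, A i = Set.univ) (hf : ∀ φ : X →L[ℝ] ℝ, Measurable fun ω => φ (f ω))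
    (hfA : ∀ i (φ : X →L[ℝ] ℝ), IntegrableOn (fun ω => φ (f ω)) (A i) ν)
    (hsum : ∀ B, MeasurableSet B →
      ∃ x : X, ∀ φ : X →L[ℝ] ℝ, HasSum (fun i => ∫ ω in A i ∩ B, φ (f ω) ∂ν) (φ x)) :
    PettisIntegrable ν f := by
  have hint (φ : X →L[ℝ] ℝ) : Integrable (fun ω => φ (f ω)) ν :=
    integrable_of_summable_setIntegral hA hcover (hf φ) (fun i => hfA i φ) fun B hB =>
      let ⟨_, hx⟩ := hsum B hB
      (hx φ).summable
  refine ⟨hint, fun B hB => ?_⟩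
  obtain ⟨x, hx⟩ := hsum B hB
  refine ⟨x, fun φ => (hx φ).unique ?_⟩
  have h := hasSum_integral_iUnion (fun i => (hA i).inter hB)
    (fun i j hij => (hdisj hij).mono Set.inter_subset_left Set.inter_subset_left)
    (hint φ).integrableOn
  rwa [← Set.iUnion_inter, hcover, Set.univ_inter] at h

lemma PettisIntegrable.integrableOn_of_indicator {A : Set Ω} (hA : MeasurableSet A)
    (h : PettisIntegrable ν (A.indicator f)) (φ : X →L[ℝ] ℝ) :
    IntegrableOn (fun ω => φ (f ω)) A ν := by
  rw [← integrable_indicator_iff hA, ← apply_indicator]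
  exact h.1 φ

lemma PettisIntegrable.exists_apply_eq_setIntegral_of_indicator {A B : Set Ω} (hA : MeasurableSet A)
    (hB : MeasurableSet B) (h : PettisIntegrable ν (A.indicator f)) :
    ∃ x : X, ∀ φ : X →L[ℝ] ℝ, φ x = ∫ ω in A ∩ B, φ (f ω) ∂ν := by
  obtain ⟨x, hx⟩ := h.2 B hB
  refine ⟨x, fun φ => ?_⟩
  rw [hx φ, apply_indicator, setIntegral_indicator hA, Set.inter_comm]

namespace HasPIP

lemma isFiniteMeasure [Nontrivial X] (hPIP : HasPIP ν X) : IsFiniteMeasure ν := by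
  obtain ⟨x, hx⟩ := exists_ne (0 : X)
  obtain ⟨φ, -, hφ⟩ := exists_dual_vector ℝ x (norm_ne_zero_iff.2 hx)
  have hconst : PettisIntegrable ν fun _ : Ω => x := by
    refine hPIP _ (fun _ => measurable_const)
      ⟨‖x‖, norm_pos_iff.2 hx, fun ψ => .of_forall fun _ => ?_⟩
    rw [mul_comm]
    exact ψ.le_opNorm x
  refine (integrable_const_iff.1 (hconst.1 φ)).resolve_left ?_
  simpa [hφ] using hx

lemma exists_partition_pettisIntegrable_indicator [SFinite ν] (hPIP : HasPIP ν X)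
    (hf : ∀ φ : X →L[ℝ] ℝ, Measurable fun ω => φ (f ω)) :
    ∃ A : ℕ → Set Ω, (∀ n, MeasurableSet (A n)) ∧ Pairwise (Function.onFun Disjoint A) ∧
      ⋃ n, A n = Set.univ ∧ ∀ n, PettisIntegrable ν ((A n).indicator f) := by
  have hbdd (ω : Ω) : BddAbove (Set.range fun φ : X →L[ℝ] ℝ => |φ (f ω)| / ‖φ‖) := by
    refine ⟨‖f ω‖, Set.forall_mem_range.2 fun φ => ?_⟩
    exact div_le_of_le_mul₀ (norm_nonneg _) (norm_nonneg _)
      ((φ.le_opNorm (f ω)).trans_eq (mul_comm _ _))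
  obtain ⟨A, hA, hdisj, hcover, hle⟩ :=
    exists_partition_ae_le (ν := ν) (fun φ => (hf φ).abs.div_const ‖φ‖) hbdd
  refine ⟨A, hA, hdisj, hcover, fun n => hPIP _ (fun φ => ?_) ⟨n + 1, by positivity, fun φ => ?_⟩⟩
  · rw [apply_indicator]
    exact (hf φ).indicator (hA n)
  · filter_upwards [hle n φ] with ω hω
    by_cases hωA : ω ∈ A n
    · rw [Set.indicator_of_mem hωA]
      rcases eq_or_ne φ 0 with rfl | hφ
      · simp
      · calc |φ (f ω)| ≤ n * ‖φ‖ := (div_le_iff₀ (norm_pos_iff.2 hφ)).1 (hω hωA)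
          _ ≤ (n + 1) * ‖φ‖ := by gcongr; exact (lt_add_one _).le
    · rw [Set.indicator_of_notMem hωA, map_zero, abs_zero]
      positivity

end HasPIP

theorem HasPropertyD.exists_hasSum_setIntegral (hD : HasPropertyD X)
    {Γ : Set (X →L[ℝ] ℝ)} (hΓ : IsTotalSet X Γ)
    (hscal : ∀ φ ∈ Γ, Integrable (fun ω => φ (f ω)) ν)
    (hint : ∀ A : Set Ω, MeasurableSet A →
      ∃ m : X, ∀ φ ∈ Γ, φ m = ∫ ω in A, φ (f ω) ∂ν)
    {ι : Type*} [Countable ι] {C : ι → Set Ω} (hC : ∀ i, MeasurableSet (C i))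
    (hdisj : Pairwise (Function.onFun Disjoint C))
    (hpettis : ∀ i, ∃ x : X, ∀ φ : X →L[ℝ] ℝ, φ x = ∫ ω in C i, φ (f ω) ∂ν) :
    ∃ y : X, ∀ φ : X →L[ℝ] ℝ, HasSum (fun i => ∫ ω in C i, φ (f ω) ∂ν) (φ y) := by
  choose x hx using hpettis
  let V : (ι → Bool) → ι → Set Ω := fun s i => if s i then C i else ∅
  have hV (s i) : MeasurableSet (V s i) := by
    dsimp only [V]; split_ifs; exacts [hC i, .empty]
  have hVdisj (s) : Pairwise (Function.onFun Disjoint (V s)) := fun i j hij => by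
    dsimp only [V, Function.onFun]
    split_ifs <;> simp [hdisj hij]
  choose y hy using fun s => hint (⋃ i, V s i) (.iUnion (hV s))
  refine ⟨y ⊤, fun φ => ?_⟩
  simp only [← hx]
  refine hD.hasSum_apply_of_subseries hΓ (fun s ψ hψ => ?_) φ
  rw [hy s ψ hψ]
  refine (hasSum_integral_iUnion (hV s) (hVdisj s) (hscal ψ hψ).integrableOn).congr_fun
    fun i => ?_
  dsimp only [V]
  split_ifs <;> simp [hx]

theorem pettis_of_gamma_integrable_of_propertyD_and_PIP_general [ν.IsComplete]
    (hD : HasPropertyD X) (hPIP : HasPIP ν X) {Γ : Set (X →L[ℝ] ℝ)} (hΓ : IsTotalSet X Γ)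
    (hscal : ∀ φ ∈ Γ, Integrable (fun ω => φ (f ω)) ν)
    (hint : ∀ A : Set Ω, MeasurableSet A →
      ∃ m : X, ∀ φ ∈ Γ, φ m = ∫ ω in A, φ (f ω) ∂ν) :
    PettisIntegrable ν f := by
  have hf : ∀ φ : X →L[ℝ] ℝ, Measurable fun ω => φ (f ω) :=
    hD.measurable_apply hΓ fun φ hφ => aemeasurable_iff_measurable.1 (hscal φ hφ).aemeasurable
  rcases subsingleton_or_nontrivial X with hX | hX
  · exact hPIP f hf ⟨1, one_pos, fun φ => by simp [Subsingleton.elim (f _) 0]⟩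
  have := hPIP.isFiniteMeasure
  obtain ⟨A, hA, hdisj, hcover, hpettis⟩ := hPIP.exists_partition_pettisIntegrable_indicator hf
  refine pettisIntegrable_of_hasSum_setIntegral hA hdisj hcover hf
    (fun n => (hpettis n).integrableOn_of_indicator (hA n)) fun B hB => ?_
  exact hD.exists_hasSum_setIntegral hΓ hscal hint (fun n => (hA n).inter hB)
    (fun i j hij => (hdisj hij).mono Set.inter_subset_left Set.inter_subset_left)
    fun n => (hpettis n).exists_apply_eq_setIntegral_of_indicator (hA n) hB

end PettisIntegral

/-- If `X` has property (D) and the `ν`-PIP, then for every total linear subspace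
`Γ ⊆ X*` every `Γ`-integrable function `f : Ω → X` is Pettis integrable. -/
theorem pettis_of_gamma_integrable_of_propertyD_and_PIP
    {Ω X : Type*} [MeasurableSpace Ω] [NormedAddCommGroup X] [NormedSpace ℝ X]
    [CompleteSpace X]
    (ν : Measure Ω) [IsProbabilityMeasure ν] [ν.IsComplete]
    (hD : HasPropertyD X) (hPIP : HasPIP ν X)
    (Γ : Submodule ℝ (X →L[ℝ] ℝ))
    (htotal : ∀ x : X, x ≠ 0 → ∃ φ ∈ Γ, φ x ≠ 0)
    (f : Ω → X)
    (hscal : ∀ φ ∈ Γ, Integrable (fun ω => φ (f ω)) ν)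
    (hint : ∀ A : Set Ω, MeasurableSet A →
      ∃ m : X, ∀ φ ∈ Γ, φ m = ∫ ω in A, φ (f ω) ∂ν) :
    PettisIntegrable ν f := by
  exact pettis_of_gamma_integrable_of_propertyD_and_PIP_general hD hPIP htotal hscal hint
end

section
/- Let (Ω,Σ,ν) be a complete probability space, X a real Banach space, Γ ⊆ X* a total linear subspace, f : Ω → X a Γ-scalarly integrable function, and D ⊆ Γ a set such that Z_{f,D} = {x* ∘ f : x* ∈ D} is uniformly integrable in L¹(ν). Let S ⊆ X* be the smallest w*-sequentially closed subset of X* containing D (i.e., the intersection of all w*-sequentially closed subsets of X* containing D). Then for every x* ∈ S the function x* ∘ f is ν-integrable, and the family Z_{f,S} = {x* ∘ f : x* ∈ S} is uniformly integrable in L¹(ν). -/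
open MeasureTheory Filter Topology

/-- A set `C ⊆ X*` is `w*`-sequentially closed: it contains the limits of all its
`w*`-convergent sequences. -/
def WStarSeqClosed {X : Type*} [NormedAddCommGroup X] [NormedSpace ℝ X]
    (C : Set (X →L[ℝ] ℝ)) : Prop :=
  ∀ (φ : ℕ → X →L[ℝ] ℝ) (ψ : X →L[ℝ] ℝ), (∀ n, φ n ∈ C) →
    (∀ x : X, Tendsto (fun n => φ n x) atTop (𝓝 (ψ x))) → ψ ∈ C

/-!
Fix `μ` and `c`. By Fatou's lemma, the functionals `φ` for which `φ ∘ f` is `μ`-integrable with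
`∫ |φ ∘ f| ∂μ ≤ c` form a `w*`-sequentially closed set. Hence such a bound passes from `D` to the
`w*`-sequential closure of `D`. Uniform integrability is a conjunction of bounds of this kind: one
for `μ = ν`, and one for each restriction of `ν` to a set of small measure.
-/

section Fatou

variable {α ι E : Type*} [MeasurableSpace α] {μ : Measure α} [NormedAddCommGroup E] {c : ℝ}

theorem eLpNorm_one_le_ofReal_iff {g : α → E} (hg : Integrable g μ) (hc : 0 ≤ c) :
    eLpNorm g 1 μ ≤ ENNReal.ofReal c ↔ ∫ a, ‖g a‖ ∂μ ≤ c := by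
  rw [eLpNorm_one_eq_lintegral_enorm, ← ofReal_integral_norm_eq_lintegral_enorm hg,
    ENNReal.ofReal_le_ofReal_iff hc]

theorem integrable_and_integral_norm_le_of_ae_tendsto {u : Filter ι} [u.NeBot]
    [u.IsCountablyGenerated] {g : ι → α → E} {h : α → E} (hg : ∀ i, Integrable (g i) μ)
    (hgc : ∀ᶠ i in u, ∫ a, ‖g i a‖ ∂μ ≤ c)
    (hlim : ∀ᵐ a ∂μ, Tendsto (fun i => g i a) u (𝓝 (h a))) :
    Integrable h μ ∧ ∫ a, ‖h a‖ ∂μ ≤ c := by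
  obtain ⟨i, hi⟩ := hgc.exists
  have hc : 0 ≤ c := (integral_nonneg fun a => norm_nonneg (g i a)).trans hi
  have hmeas : AEStronglyMeasurable h μ :=
    aestronglyMeasurable_of_tendsto_ae u (fun i => (hg i).aestronglyMeasurable) hlim
  have hnorm : eLpNorm h 1 μ ≤ ENNReal.ofReal c :=
    Lp.eLpNorm_le_of_ae_tendsto
      (hgc.mono fun i hi => (eLpNorm_one_le_ofReal_iff (hg i) hc).2 hi)
      (fun i => (hg i).aestronglyMeasurable) hlim
  have hint : Integrable h μ :=
    memLp_one_iff_integrable.1 ⟨hmeas, hnorm.trans_lt ENNReal.ofReal_lt_top⟩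
  exact ⟨hint, (eLpNorm_one_le_ofReal_iff hint hc).1 hnorm⟩

end Fatou

section WStarSeqClosure

variable {Ω X : Type*} [MeasurableSpace Ω] [NormedAddCommGroup X] [NormedSpace ℝ X]

/-- The `w*`-sequential closure of `D ⊆ X*`: the smallest `w*`-sequentially closed set containing
`D`. Adding to `D` the limits of its `w*`-convergent sequences once does not suffice in general. -/
def wStarSeqClosure (D : Set (X →L[ℝ] ℝ)) : Set (X →L[ℝ] ℝ) :=
  ⋂₀ {C : Set (X →L[ℝ] ℝ) | D ⊆ C ∧ WStarSeqClosed C}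

theorem wStarSeqClosure_subset {C D : Set (X →L[ℝ] ℝ)} (hDC : D ⊆ C) (hC : WStarSeqClosed C) :
    wStarSeqClosure D ⊆ C :=
  Set.sInter_subset_of_mem ⟨hDC, hC⟩

theorem wStarSeqClosed_setOf_integral_abs_le (μ : Measure Ω) (f : Ω → X) (c : ℝ) :
    WStarSeqClosed {φ : X →L[ℝ] ℝ |
      Integrable (fun ω => φ (f ω)) μ ∧ ∫ ω, |φ (f ω)| ∂μ ≤ c} :=
  fun _ _ hφ hlim => integrable_and_integral_norm_le_of_ae_tendsto (fun n => (hφ n).1)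
    (.of_forall fun n => (hφ n).2) (.of_forall fun ω => hlim (f ω))

theorem integrable_and_integral_abs_le_of_mem_wStarSeqClosure {μ : Measure Ω} {f : Ω → X} {c : ℝ}
    {D : Set (X →L[ℝ] ℝ)} (hint : ∀ φ ∈ D, Integrable (fun ω => φ (f ω)) μ)
    (hc : ∀ φ ∈ D, ∫ ω, |φ (f ω)| ∂μ ≤ c) {φ : X →L[ℝ] ℝ} (hφ : φ ∈ wStarSeqClosure D) :
    Integrable (fun ω => φ (f ω)) μ ∧ ∫ ω, |φ (f ω)| ∂μ ≤ c := by
  refine wStarSeqClosure_subset ?_ (wStarSeqClosed_setOf_integral_abs_le μ f c) hφ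
  exact fun ψ hψ => ⟨hint ψ hψ, hc ψ hψ⟩

theorem unifIntegrable_seq_closure_general {ν : Measure Ω} {f : Ω → X} {D : Set (X →L[ℝ] ℝ)}
    (hint : ∀ φ ∈ D, Integrable (fun ω => φ (f ω)) ν)
    (hui : UnifIntegrableFam ν {g | ∃ φ ∈ D, g = fun ω => φ (f ω)}) :
    (∀ φ ∈ wStarSeqClosure D, Integrable (fun ω => φ (f ω)) ν) ∧
    UnifIntegrableFam ν {g | ∃ φ ∈ wStarSeqClosure D, g = fun ω => φ (f ω)} := by
  obtain ⟨⟨C, hC⟩, hsmall⟩ := hui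
  have hbound {φ : X →L[ℝ] ℝ} (hφ : φ ∈ wStarSeqClosure D) :
      Integrable (fun ω => φ (f ω)) ν ∧ ∫ ω, |φ (f ω)| ∂ν ≤ C :=
    integrable_and_integral_abs_le_of_mem_wStarSeqClosure hint (fun ψ hψ => hC _ ⟨ψ, hψ, rfl⟩) hφ
  refine ⟨fun φ hφ => (hbound hφ).1, ⟨C, ?_⟩, fun ε hε => ?_⟩
  · rintro _ ⟨φ, hφ, rfl⟩
    exact (hbound hφ).2
  · obtain ⟨δ, hδ, hδε⟩ := hsmall ε hε
    refine ⟨δ, hδ, ?_⟩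
    rintro _ ⟨φ, hφ, rfl⟩ A hA hAδ
    exact (integrable_and_integral_abs_le_of_mem_wStarSeqClosure
      (fun ψ hψ => (hint ψ hψ).restrict) (fun ψ hψ => hδε _ ⟨ψ, hψ, rfl⟩ A hA hAδ) hφ).2

end WStarSeqClosure

/-- If `Z_{f,D}` is uniformly integrable and `S` is the smallest `w*`-sequentially
closed subset of `X*` containing `D`, then every `x* ∘ f` with `x* ∈ S` is integrable
and `Z_{f,S}` is uniformly integrable. -/
theorem unifIntegrable_seq_closure
    {Ω X : Type*} [MeasurableSpace Ω] [NormedAddCommGroup X] [NormedSpace ℝ X]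
    [CompleteSpace X]
    (ν : Measure Ω) [IsProbabilityMeasure ν] [ν.IsComplete]
    (Γ : Submodule ℝ (X →L[ℝ] ℝ))
    (htotal : ∀ x : X, x ≠ 0 → ∃ φ ∈ Γ, φ x ≠ 0)
    (f : Ω → X)
    (hscal : ∀ φ ∈ Γ, Integrable (fun ω => φ (f ω)) ν)
    (D : Set (X →L[ℝ] ℝ)) (hD : D ⊆ Γ)
    (hui : UnifIntegrableFam ν {g | ∃ φ ∈ D, g = fun ω => φ (f ω)})
    (S : Set (X →L[ℝ] ℝ))
    (hS : S = ⋂₀ {C : Set (X →L[ℝ] ℝ) | D ⊆ C ∧ WStarSeqClosed C}) :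
    (∀ φ ∈ S, Integrable (fun ω => φ (f ω)) ν) ∧
    UnifIntegrableFam ν {g | ∃ φ ∈ S, g = fun ω => φ (f ω)} := by
  subst hS
  exact unifIntegrable_seq_closure_general (fun φ hφ => hscal φ (hD hφ)) hui
end
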